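/- arXiv:1301.5956 — 2 statements merged into one kernel-verified Lean document; each statement's English description precedes it below -/
import Mathlib

section
/- The position uncertainty of the semiclassical wave packet φ₀ satisfies Δx = √(ħ/2)·|A|; concretely, ∫_ℝ (x−a)² |φ₀(x)|² dx = (ħ/2)|A|². -/
open MeasureTheory Complex Real

/-!
The phase `exp (iη(x - a)/ħ)` has modulus one, and `Re (conj A * B) = 1` says that
`Re (B / A) = ‖A‖⁻²`, so `‖φ₀(x)‖²` is a multiple of `exp (-(x - a)² / (ħ‖A‖²))`. Since
`‖c‖² = ‖A‖⁻¹`, the prefactor is the normalizing constant: `‖φ₀‖²` is the density of the normal law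
with mean `a` and variance `ħ‖A‖² / 2`.
-/

open ProbabilityTheory
open scoped ComplexConjugate NNReal

lemma integral_sub_sq_mul_gaussianPDFReal (μ : ℝ) (v : ℝ≥0) :
    ∫ x : ℝ, (x - μ) ^ 2 * gaussianPDFReal μ v x = v := by
  obtain rfl | hv := eq_or_ne v 0
  · simp
  calc ∫ x : ℝ, (x - μ) ^ 2 * gaussianPDFReal μ v x
      = ∫ x : ℝ, (x - μ) ^ 2 ∂gaussianReal μ v := by
        simp only [integral_gaussianReal_eq_integral_smul hv, smul_eq_mul, mul_comm]
    _ = variance (fun x ↦ x) (gaussianReal μ v) := by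
        rw [variance_eq_integral (by fun_prop), integral_id_gaussianReal]
    _ = v := variance_fun_id_gaussianReal

lemma sq_norm_mul_cexp_eq_gaussianPDFReal {z b : ℂ} {v : ℝ≥0}
    (hz : ‖z‖ ^ 2 = (√(2 * π * v))⁻¹) (hb : b.re = (4 * v : ℝ)⁻¹) (μ θ x : ℝ) :
    ‖z * cexp (-b * ((x - μ : ℝ) : ℂ) ^ 2 + θ * I)‖ ^ 2 = gaussianPDFReal μ v x := by
  have hnorm : ‖cexp (-b * ((x - μ : ℝ) : ℂ) ^ 2 + θ * I)‖ =
      rexp (-(4 * v : ℝ)⁻¹ * (x - μ) ^ 2) := by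
    rw [Complex.exp_add, norm_mul, norm_cexp_neg_mul_sq, norm_exp_ofReal_mul_I, mul_one, hb]
  rw [norm_mul, mul_pow, hz, hnorm, ← Real.exp_nat_mul, gaussianPDFReal]
  congr 2
  push_cast
  ring

lemma sq_rpow_neg_one_fourth {t : ℝ} (ht : 0 ≤ t) : (t ^ (-(1 / 4 : ℝ))) ^ 2 = (√t)⁻¹ := by
  rw [← Real.rpow_mul_natCast ht, Real.sqrt_eq_rpow, ← Real.rpow_neg ht]
  norm_num

lemma re_div_eq_re_conj_mul_div_sq_norm (z w : ℂ) :
    (z / w).re = (conj w * z).re / ‖w‖ ^ 2 := by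
  rw [div_eq_mul_inv, Complex.inv_def, ← mul_assoc, Complex.re_mul_ofReal, mul_comm z,
    Complex.normSq_eq_norm_sq, ← div_eq_mul_inv]

lemma re_conj_mul_eq_one {z w : ℂ} (h : conj z * w + conj w * z = 2) : (conj z * w).re = 1 := by
  have hconj : conj w * z = conj (conj z * w) := by
    rw [map_mul, Complex.conj_conj, mul_comm]
  rw [hconj, Complex.add_conj] at h
  have : 2 * (conj z * w).re = 2 := by exact_mod_cast h
  linarith

/-- The semiclassical wave packet `φ₀` centred at position `a` with momentum `η`, whose complex
width is governed by `A` and `B`. The value of `A ^ (-1/2)` in the prefactor is the separate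
argument `c`, so that the choice of branch stays free. -/
noncomputable def wavePacket (hbar a η : ℝ) (A B c : ℂ) (x : ℝ) : ℂ :=
  (π ^ (-(1/4 : ℝ)) : ℝ) * (hbar ^ (-(1/4 : ℝ)) : ℝ) * c *
    cexp (-B * ((x : ℂ) - a) ^ 2 / (2 * A * hbar) + I * η * ((x : ℂ) - a) / hbar)

namespace wavePacket

variable {hbar : ℝ} {A B c : ℂ}

lemma sq_norm_prefactor (hhbar : 0 ≤ hbar) (hc : c ^ 2 = A⁻¹) :
    ‖(π ^ (-(1/4 : ℝ)) : ℝ) * (hbar ^ (-(1/4 : ℝ)) : ℝ) * c‖ ^ 2 =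
      (√(π * hbar * ‖A‖ ^ 2))⁻¹ := by
  have hc_norm : ‖c‖ ^ 2 = ‖A‖⁻¹ := by rw [← norm_pow, hc, norm_inv]
  rw [norm_mul, norm_mul, mul_pow, mul_pow, Complex.norm_real, Complex.norm_real, Real.norm_eq_abs,
    Real.norm_eq_abs, sq_abs, sq_abs, sq_rpow_neg_one_fourth pi_nonneg,
    sq_rpow_neg_one_fourth hhbar, hc_norm, Real.sqrt_mul (by positivity),
    Real.sqrt_mul pi_nonneg, Real.sqrt_sq (norm_nonneg A), mul_inv, mul_inv]

lemma re_quadratic_coeff (hAB : conj A * B + conj B * A = 2) :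
    (B / (2 * A * hbar)).re = (2 * hbar * ‖A‖ ^ 2)⁻¹ := by
  have hsplit : B / (2 * A * hbar) = ((2 * hbar : ℝ)⁻¹ : ℝ) * (B / A) := by
    push_cast
    ring
  rw [hsplit, Complex.re_ofReal_mul, re_div_eq_re_conj_mul_div_sq_norm, re_conj_mul_eq_one hAB,
    one_div, ← mul_inv]

lemma sq_norm_eq_gaussianPDFReal (hhbar : 0 ≤ hbar) (hAB : conj A * B + conj B * A = 2)
    (hc : c ^ 2 = A⁻¹) (a η x : ℝ) {v : ℝ≥0} (hv : v = hbar / 2 * ‖A‖ ^ 2) :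
    ‖wavePacket hbar a η A B c x‖ ^ 2 = gaussianPDFReal a v x := by
  have hz : ‖(π ^ (-(1/4 : ℝ)) : ℝ) * (hbar ^ (-(1/4 : ℝ)) : ℝ) * c‖ ^ 2 =
      (√(2 * π * v))⁻¹ := by
    rw [sq_norm_prefactor hhbar hc, hv]
    ring_nf
  have hb : (B / (2 * A * hbar)).re = (4 * v : ℝ)⁻¹ := by
    rw [re_quadratic_coeff hAB, hv]
    ring_nf
  rw [← sq_norm_mul_cexp_eq_gaussianPDFReal hz hb a (η * (x - a) / hbar) x, wavePacket]
  push_cast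
  ring_nf

end wavePacket

/-- The position uncertainty of the semiclassical wave packet `φ₀` satisfies
`Δx = √(ħ/2)·|A|`; concretely, `∫ (x−a)² |φ₀(x)|² dx = (ħ/2)|A|²`. -/
theorem stmt_1 (hbar a η : ℝ) (hhbar : 0 < hbar) (A B c : ℂ)
    (hAB : (starRingEnd ℂ) A * B + (starRingEnd ℂ) B * A = 2)
    (hc : c ^ 2 = A⁻¹) (φ : ℝ → ℂ)
    (hφ : ∀ x : ℝ, φ x =
      (Real.pi ^ (-(1/4 : ℝ)) : ℝ) * (hbar ^ (-(1/4 : ℝ)) : ℝ) * c *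
        Complex.exp (-B * ((x : ℂ) - a) ^ 2 / (2 * A * hbar) +
          Complex.I * η * ((x : ℂ) - a) / hbar)) :
    ∫ x : ℝ, (x - a) ^ 2 * ‖φ x‖ ^ 2 = hbar / 2 * ‖A‖ ^ 2 := by
  let v : ℝ≥0 := ⟨hbar / 2 * ‖A‖ ^ 2, by positivity⟩
  have hφ_density (x : ℝ) : ‖φ x‖ ^ 2 = gaussianPDFReal a v x := by
    rw [hφ]
    exact wavePacket.sq_norm_eq_gaussianPDFReal hhbar.le hAB hc a η x rfl
  calc ∫ x : ℝ, (x - a) ^ 2 * ‖φ x‖ ^ 2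
      = ∫ x : ℝ, (x - a) ^ 2 * gaussianPDFReal a v x := by simp only [hφ_density]
    _ = hbar / 2 * ‖A‖ ^ 2 := integral_sub_sq_mul_gaussianPDFReal a v
end

section
/- Let A₀, B₀ ∈ ℂ satisfy Re(\overline{A₀}·B₀) = 1 and |A₀| ≠ |B₀|, and set θ = ½·arctan(2·Im(B₀\overline{A₀})/(|B₀|² − |A₀|²)). Define A(θ) = A₀·cos θ + i·B₀·sin θ and B(θ) = i·A₀·sin θ + B₀·cos θ. Then Im(B(θ)·\overline{A(θ)}) = 0 and |A(θ)|·|B(θ)| = 1. -/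
open Complex Real

/-!
The evolution preserves the real part of `B(t) * conj A(t)`, whereas its imaginary part and
`(|B(t)|² - |A(t)|²) / 2` are the coordinates of a planar vector turning at angular speed `2`, and
`θ` is a time at which the former vanishes. There the product is real, so its norm `|A(θ)| |B(θ)|`
is the absolute value of the conserved real part.
-/

/-- The Gaussian parameter `A(t)` of a wave packet with initial parameters `A` and `B`, evolved by
the harmonic oscillator of frequency `1`. The evolution is symmetric in the two parameters, so
`B(t)` is `evolvedParam B A t`. -/
noncomputable def evolvedParam (A B : ℂ) (t : ℝ) : ℂ :=
  A * Real.cos t + I * B * Real.sin t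

section

open scoped ComplexConjugate

variable (A B : ℂ) (t : ℝ)

theorem evolvedParam_mul_conj_re :
    (evolvedParam B A t * conj (evolvedParam A B t)).re = (conj A * B).re := by
  simp only [evolvedParam, map_add, map_mul, conj_I, conj_ofReal, add_re, add_im, mul_re, mul_im,
    neg_re, neg_im, I_re, I_im, ofReal_re, ofReal_im, conj_re, conj_im]
  linear_combination (A.re * B.re + A.im * B.im) * Real.sin_sq_add_cos_sq t

theorem evolvedParam_mul_conj_im :
    (evolvedParam B A t * conj (evolvedParam A B t)).im =
      (B * conj A).im * Real.cos (2 * t) - (‖B‖ ^ 2 - ‖A‖ ^ 2) / 2 * Real.sin (2 * t) := by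
  rw [Real.cos_two_mul', Real.sin_two_mul, Complex.sq_norm, Complex.sq_norm, normSq_apply,
    normSq_apply]
  simp only [evolvedParam, map_add, map_mul, conj_I, conj_ofReal, add_re, add_im, mul_re, mul_im,
    neg_re, neg_im, I_re, I_im, ofReal_re, ofReal_im, conj_re, conj_im]
  ring

variable {A B t} in
theorem norm_evolvedParam_mul_norm_of_im_eq_zero
    (him : (evolvedParam B A t * conj (evolvedParam A B t)).im = 0) :
    ‖evolvedParam A B t‖ * ‖evolvedParam B A t‖ = |(conj A * B).re| := by
  rw [← evolvedParam_mul_conj_re A B t, abs_re_eq_norm.mpr him, norm_mul, norm_conj, mul_comm]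

end

theorem mul_sin_arctan_div {d : ℝ} (hd : d ≠ 0) (m : ℝ) :
    d * Real.sin (Real.arctan (m / d)) = m * Real.cos (Real.arctan (m / d)) := by
  rw [← Real.tan_mul_cos (Real.cos_arctan_pos _).ne', Real.tan_arctan, ← mul_assoc,
    mul_div_cancel₀ m hd]

theorem stmt_19_general (A₀ B₀ : ℂ) (hne : ‖A₀‖ ≠ ‖B₀‖) :
    let θ : ℝ := 1 / 2 *
      Real.arctan (2 * (B₀ * (starRingEnd ℂ) A₀).im / (‖B₀‖ ^ 2 - ‖A₀‖ ^ 2))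
    (evolvedParam B₀ A₀ θ * (starRingEnd ℂ) (evolvedParam A₀ B₀ θ)).im = 0 ∧
      ‖evolvedParam A₀ B₀ θ‖ * ‖evolvedParam B₀ A₀ θ‖ = |((starRingEnd ℂ) A₀ * B₀).re| := by
  intro θ
  have hd : ‖B₀‖ ^ 2 - ‖A₀‖ ^ 2 ≠ 0 :=
    sub_ne_zero.mpr fun h => hne ((sq_eq_sq₀ (norm_nonneg _) (norm_nonneg _)).mp h.symm)
  have h2θ : 2 * θ =
      Real.arctan (2 * (B₀ * (starRingEnd ℂ) A₀).im / (‖B₀‖ ^ 2 - ‖A₀‖ ^ 2)) := by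
    simp only [θ]
    ring
  have him : (evolvedParam B₀ A₀ θ * (starRingEnd ℂ) (evolvedParam A₀ B₀ θ)).im = 0 := by
    rw [evolvedParam_mul_conj_im, h2θ]
    linear_combination -mul_sin_arctan_div hd (2 * (B₀ * (starRingEnd ℂ) A₀).im) / 2
  exact ⟨him, norm_evolvedParam_mul_norm_of_im_eq_zero him⟩

/-- For `A₀, B₀ ∈ ℂ` with `Re(conj(A₀)·B₀) = 1` and `|A₀| ≠ |B₀|`, with
`θ = ½·arctan(2·Im(B₀ conj A₀)/(|B₀|² − |A₀|²))`, the rotated parameters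
`A(θ) = A₀·cos θ + i·B₀·sin θ` and `B(θ) = i·A₀·sin θ + B₀·cos θ` satisfy
`Im(B(θ)·conj(A(θ))) = 0` and `|A(θ)|·|B(θ)| = 1`. -/
theorem stmt_19 (A₀ B₀ : ℂ)
    (hnorm : ((starRingEnd ℂ) A₀ * B₀).re = 1) (hne : ‖A₀‖ ≠ ‖B₀‖) :
    let θ : ℝ := 1 / 2 *
      Real.arctan (2 * (B₀ * (starRingEnd ℂ) A₀).im / (‖B₀‖ ^ 2 - ‖A₀‖ ^ 2))
    let Aθ : ℂ := A₀ * Real.cos θ + Complex.I * B₀ * Real.sin θ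
    let Bθ : ℂ := Complex.I * A₀ * Real.sin θ + B₀ * Real.cos θ
    (Bθ * (starRingEnd ℂ) Aθ).im = 0 ∧ ‖Aθ‖ * ‖Bθ‖ = 1 := by
  simpa only [evolvedParam, hnorm, abs_one, add_comm (B₀ * _)] using stmt_19_general A₀ B₀ hne
end
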